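/- For every solution of the backward Ricci flow system of class U3S3, the identity d/dt(A−B) = (A−B)((A+B)² − C²)/(ABC) holds on [0,T); consequently, if A(0) = B(0) then A(t) = B(t) for all t ∈ [0,T), and if A(0) > B(0) then A(t) > B(t) for all t ∈ [0,T). -/

import Mathlib

open Real Set ENNReal

/-- The time domain `[0, T)` where `T ∈ (0, ∞]` is an extended nonnegative real. -/
def flowDomain (T : ℝ≥0∞) : Set ℝ := {t : ℝ | 0 ≤ t ∧ ENNReal.ofReal t < T}

/-!
The right-hand sides of the equations for `A` and `B` differ by a multiple of `A - B`, so `A - B`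
solves a scalar linear equation `u' = g u` with `g` continuous. Hence `A - B` is its initial value
times the exponential of the integral of `g`, and its sign is constant in time.
-/

section LinearODE

open scoped Interval

variable {E : Type*} [NormedAddCommGroup E] [NormedSpace ℝ E]

theorem hasDerivWithinAt_integral_of_continuousOn_uIcc [CompleteSpace E] {f : ℝ → E} {a b t : ℝ}
    (hf : ContinuousOn f [[a, b]]) (ht : t ∈ [[a, b]]) :
    HasDerivWithinAt (fun x => ∫ y in a..x, f y) (f t) [[a, b]] t :=
  have : Fact (t ∈ [[a, b]]) := ⟨ht⟩
  intervalIntegral.integral_hasDerivWithinAt_right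
    (hf.mono (uIcc_subset_uIcc left_mem_uIcc ht)).intervalIntegrable
    (hf.stronglyMeasurableAtFilter_nhdsWithin measurableSet_uIcc t) (hf t ht)

theorem eq_of_hasDerivWithinAt_zero {s : Set ℝ} (hs : Convex ℝ s) {u : ℝ → E}
    (hu : ∀ t ∈ s, HasDerivWithinAt u 0 s t) {a b : ℝ} (ha : a ∈ s) (hb : b ∈ s) : u b = u a := by
  have norm_le := hs.norm_image_sub_le_of_norm_hasDerivWithin_le hu
    (fun _ _ => norm_zero.le) ha hb
  rwa [zero_mul, norm_le_zero_iff, sub_eq_zero] at norm_le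

theorem eq_exp_integral_smul_of_hasDerivWithinAt {g : ℝ → ℝ} {u : ℝ → E} {a b : ℝ}
    (hg : ContinuousOn g [[a, b]])
    (hu : ∀ t ∈ [[a, b]], HasDerivWithinAt u (g t • u t) [[a, b]] t) :
    u b = exp (∫ y in a..b, g y) • u a := by
  let G : ℝ → ℝ := fun x => ∫ y in a..x, g y
  have deriv_zero : ∀ t ∈ [[a, b]],
      HasDerivWithinAt (fun x => exp (-G x) • u x) 0 [[a, b]] t := by
    intro t ht
    have hG : HasDerivWithinAt G (g t) [[a, b]] t :=
      hasDerivWithinAt_integral_of_continuousOn_uIcc hg ht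
    refine (hG.fun_neg.exp.fun_smul (hu t ht)).congr_deriv ?_
    module
  have const : exp (-G b) • u b = u a := by
    simpa [G] using eq_of_hasDerivWithinAt_zero (convex_uIcc a b) deriv_zero
      left_mem_uIcc right_mem_uIcc
  rw [← const, smul_smul, ← exp_add, add_neg_cancel, exp_zero, one_smul]

theorem exists_pos_eq_mul_of_hasDerivWithinAt_mul {s : Set ℝ} (hs : s.OrdConnected) {g u : ℝ → ℝ}
    (hg : ContinuousOn g s) (hu : ∀ t ∈ s, HasDerivWithinAt u (g t * u t) s t) {a b : ℝ}
    (ha : a ∈ s) (hb : b ∈ s) : ∃ k, 0 < k ∧ u b = k * u a := by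
  have hsub : [[a, b]] ⊆ s := hs.uIcc_subset ha hb
  exact ⟨_, exp_pos _, eq_exp_integral_smul_of_hasDerivWithinAt (hg.mono hsub)
    fun t ht => (hu t (hsub ht)).mono hsub⟩

end LinearODE

section Flow

variable {s : Set ℝ} {A B C : ℝ → ℝ}

theorem hasDerivWithinAt_sub_of_backwardRicciFlow {t : ℝ}
    (hAt : A t ≠ 0) (hBt : B t ≠ 0) (hCt : C t ≠ 0)
    (hA : HasDerivWithinAt A ((A t ^ 2 - (B t - C t) ^ 2) / (B t * C t)) s t)
    (hB : HasDerivWithinAt B ((B t ^ 2 - (A t - C t) ^ 2) / (A t * C t)) s t) :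
    HasDerivWithinAt (fun x => A x - B x)
      ((A t - B t) * ((A t + B t) ^ 2 - C t ^ 2) / (A t * B t * C t)) s t := by
  refine (hA.fun_sub hB).congr_deriv ?_
  field_simp
  ring

theorem exists_pos_sub_eq_mul_of_backwardRicciFlow (hs : s.OrdConnected)
    (hne : ∀ t ∈ s, A t ≠ 0 ∧ B t ≠ 0 ∧ C t ≠ 0)
    (hA : ∀ t ∈ s, HasDerivWithinAt A ((A t ^ 2 - (B t - C t) ^ 2) / (B t * C t)) s t)
    (hB : ∀ t ∈ s, HasDerivWithinAt B ((B t ^ 2 - (A t - C t) ^ 2) / (A t * C t)) s t)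
    (hC : ContinuousOn C s) {t₀ t : ℝ} (ht₀ : t₀ ∈ s) (ht : t ∈ s) :
    ∃ k, 0 < k ∧ A t - B t = k * (A t₀ - B t₀) := by
  have hAc : ContinuousOn A s := HasDerivWithinAt.continuousOn hA
  have hBc : ContinuousOn B s := HasDerivWithinAt.continuousOn hB
  have hg : ContinuousOn (fun x => ((A x + B x) ^ 2 - C x ^ 2) / (A x * B x * C x)) s :=
    (((hAc.add hBc).pow 2).sub (hC.pow 2)).div ((hAc.mul hBc).mul hC) fun x hx =>
      have ⟨hAx, hBx, hCx⟩ := hne x hx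
      mul_ne_zero (mul_ne_zero hAx hBx) hCx
  refine exists_pos_eq_mul_of_hasDerivWithinAt_mul hs hg (u := fun x => A x - B x)
    (fun x hx => ?_) ht₀ ht
  obtain ⟨hAx, hBx, hCx⟩ := hne x hx
  exact (hasDerivWithinAt_sub_of_backwardRicciFlow hAx hBx hCx (hA x hx) (hB x hx)).congr_deriv
    (by ring)

theorem stmt16_general (hs : s.OrdConnected)
    (hne : ∀ t ∈ s, A t ≠ 0 ∧ B t ≠ 0 ∧ C t ≠ 0)
    (hA : ∀ t ∈ s, HasDerivWithinAt A ((A t ^ 2 - (B t - C t) ^ 2) / (B t * C t)) s t)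
    (hB : ∀ t ∈ s, HasDerivWithinAt B ((B t ^ 2 - (A t - C t) ^ 2) / (A t * C t)) s t)
    (hC : ContinuousOn C s) :
    (∀ t ∈ s, HasDerivWithinAt (fun x => A x - B x)
      ((A t - B t) * ((A t + B t) ^ 2 - C t ^ 2) / (A t * B t * C t)) s t) ∧
    (∀ t₀ ∈ s, A t₀ = B t₀ → ∀ t ∈ s, A t = B t) ∧
    (∀ t₀ ∈ s, A t₀ > B t₀ → ∀ t ∈ s, A t > B t) := by
  refine ⟨fun t ht => ?_, fun t₀ ht₀ h₀ t ht => ?_, fun t₀ ht₀ h₀ t ht => ?_⟩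
  · obtain ⟨hAt, hBt, hCt⟩ := hne t ht
    exact hasDerivWithinAt_sub_of_backwardRicciFlow hAt hBt hCt (hA t ht) (hB t ht)
  · obtain ⟨k, -, hk⟩ := exists_pos_sub_eq_mul_of_backwardRicciFlow hs hne hA hB hC ht₀ ht
    rwa [h₀, sub_self, mul_zero, sub_eq_zero] at hk
  · obtain ⟨k, hk_pos, hk⟩ := exists_pos_sub_eq_mul_of_backwardRicciFlow hs hne hA hB hC ht₀ ht
    exact sub_pos.mp (hk ▸ mul_pos hk_pos (sub_pos.mpr h₀))

end Flow

theorem ordConnected_flowDomain (T : ℝ≥0∞) : (flowDomain T).OrdConnected :=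
  ⟨fun _ ha _ hb _ ht => ⟨ha.1.trans ht.1, (ofReal_le_ofReal ht.2).trans_lt hb.2⟩⟩

theorem zero_mem_flowDomain {T : ℝ≥0∞} (hT : 0 < T) : (0 : ℝ) ∈ flowDomain T :=
  ⟨le_rfl, by rwa [ofReal_zero]⟩

/-- For every solution of the backward Ricci flow system of class `U3S3`, the identity
`d/dt(A−B) = (A−B)((A+B)² − C²)/(ABC)` holds on `[0,T)`; consequently, if `A(0) = B(0)`
then `A = B` on `[0,T)`, and if `A(0) > B(0)` then `A > B` on `[0,T)`. -/
theorem stmt16 (T : ℝ≥0∞) (hT : 0 < T)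
    (lam1 lam2 lam3 : ℝ)
    (hlam1 : 0 < lam1) (hlam2 : 0 < lam2) (hlam3 : 0 < lam3)
    (A B C : ℝ → ℝ)
    (hpos : ∀ t ∈ flowDomain T, 0 < A t ∧ 0 < B t ∧ 0 < C t)
    (hA : ∀ t ∈ flowDomain T,
      HasDerivWithinAt A ((A t ^ 2 - (B t - C t) ^ 2) / (B t * C t)) (flowDomain T) t)
    (hB : ∀ t ∈ flowDomain T,
      HasDerivWithinAt B ((B t ^ 2 - (A t - C t) ^ 2) / (A t * C t)) (flowDomain T) t)
    (hC : ∀ t ∈ flowDomain T,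
      HasDerivWithinAt C ((C t ^ 2 - (A t - B t) ^ 2) / (A t * B t)) (flowDomain T) t)
    (hA0 : A 0 = lam1) (hB0 : B 0 = lam2) (hC0 : C 0 = lam3) :
    (∀ t ∈ flowDomain T,
      HasDerivWithinAt (fun s => A s - B s)
        ((A t - B t) * ((A t + B t) ^ 2 - C t ^ 2) / (A t * B t * C t)) (flowDomain T) t) ∧
    (A 0 = B 0 → ∀ t ∈ flowDomain T, A t = B t) ∧
    (A 0 > B 0 → ∀ t ∈ flowDomain T, A t > B t) := by
  obtain ⟨hsub, heq, hgt⟩ := stmt16_general (ordConnected_flowDomain T)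
    (fun t ht => (hpos t ht).imp ne_of_gt (.imp ne_of_gt ne_of_gt)) hA hB
    (HasDerivWithinAt.continuousOn hC)
  exact ⟨hsub, heq 0 (zero_mem_flowDomain hT), hgt 0 (zero_mem_flowDomain hT)⟩
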